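/- arXiv:2009.01025 — 3 statements merged into one kernel-verified Lean document; each statement's English description precedes it below -/
import Mathlib

section
/- Let t, c, d ∈ F with t ≠ 0, d ≠ 0 and c^{q+1} ≠ d^{q+1}, and set s = c·d^{-1} (so s^{q+1} ≠ 1). Then for every x ∈ F, f_{c,d}^{-1}(f_{t,0}(f_{c,d}(x))) = ((t·s^{q+1} − t^q)/(s^{q+1} − 1))·x + (((t − t^q)·s^q)/(s^{q+1} − 1))·x^q, i.e., the conjugate of f_{t,0} by f_{c,d} equals L_{t,s}. -/
/-!
Write `f_{a,b} x = a x + b φ(x)` for an involution `φ` of a field; over a field with `q ^ 2`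
elements `φ` is `x ↦ x ^ q`. These maps compose like the matrices `!![a, b; φ b, φ a]`, so
`f_{c,d}` has "determinant" `N = φ(c) c - φ(d) d` and inverse `f_{φ(c)/N, -d/N}`. Composing three
such maps gives the conjugate of `f_{t,0}`, and dividing numerators and denominators by `φ(d) d`
expresses its coefficients through `s = c / d`.
-/

section TwistedMap

/-- The map `f_{a,b} : x ↦ a x + b φ(x)` attached to a ring endomorphism `φ`, which takes the place
of `x ↦ x ^ q`. -/
def twistedMap {R : Type*} [Semiring R] (φ : R →+* R) (a b : R) : R → R :=
  fun x => a * x + b * φ x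

theorem twistedMap_zero_right {R : Type*} [Semiring R] (φ : R →+* R) (a x : R) :
    twistedMap φ a 0 x = a * x := by
  simp [twistedMap]

theorem twistedMap_twistedMap {R : Type*} [CommSemiring R] {φ : R →+* R}
    (hφ : Function.Involutive φ) (a b c d x : R) :
    twistedMap φ a b (twistedMap φ c d x) =
      twistedMap φ (a * c + b * φ d) (a * d + b * φ c) x := by
  simp only [twistedMap, map_add, map_mul, hφ x]
  ring

variable {K : Type*} [Field K] {φ : K →+* K} {c d : K}

theorem leftInverse_twistedMap (hφ : Function.Involutive φ) (hcd : φ c * c ≠ φ d * d) :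
    Function.LeftInverse
      (twistedMap φ (φ c / (φ c * c - φ d * d)) (-d / (φ c * c - φ d * d)))
      (twistedMap φ c d) := by
  intro x
  have hN : φ c * c - φ d * d ≠ 0 := sub_ne_zero.2 hcd
  have fst_eq : φ c / (φ c * c - φ d * d) * c + -d / (φ c * c - φ d * d) * φ d = 1 := by
    rw [← div_self hN]
    ring
  have snd_eq : φ c / (φ c * c - φ d * d) * d + -d / (φ c * c - φ d * d) * φ c = 0 := by
    ring
  rw [twistedMap_twistedMap hφ, fst_eq, snd_eq, twistedMap_zero_right, one_mul]

theorem rightInverse_twistedMap (hφ : Function.Involutive φ) (hcd : φ c * c ≠ φ d * d) :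
    Function.RightInverse
      (twistedMap φ (φ c / (φ c * c - φ d * d)) (-d / (φ c * c - φ d * d)))
      (twistedMap φ c d) := by
  intro x
  have hN : φ c * c - φ d * d ≠ 0 := sub_ne_zero.2 hcd
  have map_N : φ (φ c * c - φ d * d) = φ c * c - φ d * d := by
    simp only [map_sub, map_mul, hφ c, hφ d, mul_comm]
  have fst_eq : c * (φ c / (φ c * c - φ d * d)) + d * φ (-d / (φ c * c - φ d * d)) = 1 := by
    rw [map_div₀, map_N, map_neg, ← div_self hN]
    ring
  have snd_eq : c * (-d / (φ c * c - φ d * d)) + d * φ (φ c / (φ c * c - φ d * d)) = 0 := by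
    rw [map_div₀, map_N, hφ c]
    ring
  rw [twistedMap_twistedMap hφ, fst_eq, snd_eq, twistedMap_zero_right, one_mul]

theorem invFun_twistedMap (hφ : Function.Involutive φ) (hcd : φ c * c ≠ φ d * d) :
    Function.invFun (twistedMap φ c d) =
      twistedMap φ (φ c / (φ c * c - φ d * d)) (-d / (φ c * c - φ d * d)) :=
  Function.invFun_eq_of_injective_of_rightInverse (leftInverse_twistedMap hφ hcd).injective
    (rightInverse_twistedMap hφ hcd)

theorem invFun_twistedMap_conj (hφ : Function.Involutive φ) (hcd : φ c * c ≠ φ d * d) (t x : K) :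
    Function.invFun (twistedMap φ c d) (t * twistedMap φ c d x) =
      twistedMap φ ((t * (φ c * c) - φ t * (φ d * d)) / (φ c * c - φ d * d))
        ((t - φ t) * (φ c * d) / (φ c * c - φ d * d)) x := by
  rw [invFun_twistedMap hφ hcd, ← twistedMap_zero_right φ t, twistedMap_twistedMap hφ,
    twistedMap_twistedMap hφ, map_zero]
  congr 1 <;> ring

theorem conj_f_t0_eq_L_general (hφ : Function.Involutive φ) (hd : d ≠ 0)
    (hcd : φ c * c ≠ φ d * d) (t : K) {s : K} (hs : s = c * d⁻¹) :
    φ s * s ≠ 1 ∧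
    ∀ x : K,
      Function.invFun (twistedMap φ c d) (t * twistedMap φ c d x) =
        twistedMap φ ((t * (φ s * s) - φ t) / (φ s * s - 1))
          ((t - φ t) * φ s / (φ s * s - 1)) x := by
  obtain rfl : c = s * d := by rw [hs, inv_mul_cancel_right₀ hd]
  have hdd : φ d * d ≠ 0 := mul_ne_zero ((map_ne_zero φ).2 hd) hd
  have map_mul_self : φ (s * d) * (s * d) = φ s * s * (φ d * d) := by
    rw [map_mul, mul_mul_mul_comm]
  refine ⟨fun h => hcd (by rw [map_mul_self, h, one_mul]), fun x => ?_⟩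
  have det_eq : φ (s * d) * (s * d) - φ d * d = (φ s * s - 1) * (φ d * d) := by
    rw [map_mul_self, sub_one_mul]
  rw [invFun_twistedMap_conj hφ hcd, det_eq]
  congr 1
  · rw [map_mul_self, ← mul_assoc, ← sub_mul, mul_div_mul_right _ _ hdd]
  · rw [map_mul, mul_assoc (φ s), ← mul_assoc, mul_div_mul_right _ _ hdd]

end TwistedMap

section FiniteField

variable {F : Type*} [Field F] [Fintype F] {q : ℕ}

theorem exists_ringHom_eq_pow_of_dvd_card (hq : q ∣ Fintype.card F) :
    ∃ φ : F →+* F, ∀ x, φ x = x ^ q := by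
  obtain ⟨p, _⟩ := CharP.exists F
  obtain ⟨n, hp, hcard⟩ := FiniteField.card F p
  obtain ⟨k, -, rfl⟩ := (Nat.dvd_prime_pow hp).1 (hcard ▸ hq)
  have : ExpChar F p := ExpChar.prime hp
  exact ⟨iterateFrobenius F p k, iterateFrobenius_def p k⟩

theorem exists_involutive_ringHom_eq_pow (hF : Fintype.card F = q ^ 2) :
    ∃ φ : F →+* F, Function.Involutive φ ∧ ∀ x, φ x = x ^ q := by
  obtain ⟨φ, hpow⟩ := exists_ringHom_eq_pow_of_dvd_card (hF ▸ dvd_pow_self q two_ne_zero)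
  refine ⟨φ, fun x => ?_, hpow⟩
  rw [hpow, hpow, ← pow_mul, ← sq, ← hF, FiniteField.pow_card]

end FiniteField

/-- Let `q` be a prime power and `F` a finite field with `q^2` elements.
Let `t, c, d ∈ F` with `t ≠ 0`, `d ≠ 0` and `c^(q+1) ≠ d^(q+1)`, and set
`s = c * d⁻¹` (so `s^(q+1) ≠ 1`).  Then for every `x ∈ F`,
`f_{c,d}⁻¹ (f_{t,0} (f_{c,d} x)) = L_{t,s} x`, i.e. the conjugate of `f_{t,0}`
by `f_{c,d}` equals `L_{t,s}`. -/
theorem conj_f_t0_eq_L (q : ℕ) (hq : IsPrimePow q) (F : Type*) [Field F] [Fintype F]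
    (hF : Fintype.card F = q ^ 2) (t c d : F) (ht : t ≠ 0) (hd : d ≠ 0)
    (hcd : c ^ (q + 1) ≠ d ^ (q + 1)) (s : F) (hs : s = c * d⁻¹) :
    s ^ (q + 1) ≠ 1 ∧
    ∀ x : F,
      Function.invFun (fun y : F => c * y + d * y ^ q) (t * (c * x + d * x ^ q)) =
        ((t * s ^ (q + 1) - t ^ q) / (s ^ (q + 1) - 1)) * x +
        ((t - t ^ q) * s ^ q / (s ^ (q + 1) - 1)) * x ^ q := by
  obtain ⟨φ, hφ, hpow⟩ := exists_involutive_ringHom_eq_pow hF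
  simp only [pow_succ, ← hpow] at hcd ⊢
  exact conj_f_t0_eq_L_general hφ hd hcd t hs
end

section
/- Suppose q is odd. Let c ∈ F with c ≠ 0, let d ∈ F with d^q = d and d ≠ 0, and let x₀ ∈ F satisfy c·x₀² + d·x₀ + c^q = 0. Set Δ = d² − 4·c^{q+1} (an element of the subfield 𝔽_q). Then x₀^{q+1} = 1 if and only if Δ = 0 or there is no z ∈ F with z^q = z and z² = Δ. -/
/-!
Let `σ` be the `q`-power Frobenius, an involution of `F` since `|F| = q ^ 2`, so that
`x₀ ^ (q + 1) = x₀ * σ x₀`. The element `w = 2 * c * x₀ + d` is a square root of the discriminant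
`Δ`, and `σ` fixes `Δ`, so `σ w = w` or `σ w = -w`. Multiplying `σ w + w` by `x₀` and using the
equation of `x₀` gives `2 * σ c * (x₀ * σ x₀ - 1)`, hence `x₀ * σ x₀ = 1` exactly when `σ w = -w`.
This happens when `w = 0` or when the square roots `w`, `-w` of `Δ` are not fixed by `σ`.
-/

section QuadraticWithInvolution

variable {R : Type*} [CommRing R] {σ : R →+* R} {c d x : R}

lemma map_discrim_eq_self (hσ : Function.Involutive σ) (hd : σ d = d) :
    σ (discrim c d (σ c)) = discrim c d (σ c) := by
  simp only [discrim, map_sub, map_pow, map_mul, map_ofNat, hd, hσ c]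
  ring

variable [IsDomain R]

lemma map_eq_neg_self_iff_of_map_sq {w : R} (h2 : (2 : R) ≠ 0) (hw : σ (w ^ 2) = w ^ 2) :
    σ w = -w ↔ w ^ 2 = 0 ∨ ¬∃ z, σ z = z ∧ z ^ 2 = w ^ 2 := by
  have self_or_neg : σ w = w ∨ σ w = -w := by
    rwa [map_pow, sq_eq_sq_iff_eq_or_eq_neg] at hw
  constructor
  · intro hneg
    refine or_iff_not_imp_right.mpr fun hfixed => ?_
    obtain ⟨z, hz, hzw⟩ := not_not.mp hfixed
    have hself : σ w = w := by
      rcases sq_eq_sq_iff_eq_or_eq_neg.mp hzw with rfl | rfl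
      · exact hz
      · simpa using hz
    have two_mul_w : 2 * w = 0 := by linear_combination hneg - hself
    simpa [h2] using two_mul_w
  · rintro (hzero | hnonsquare)
    · simp [pow_eq_zero_iff two_ne_zero |>.mp hzero]
    · exact self_or_neg.resolve_left fun hself => hnonsquare ⟨w, hself, rfl⟩

lemma mul_map_eq_one_iff_map_eq_neg (h2 : (2 : R) ≠ 0) (hc : σ c ≠ 0) (hd : σ d = d)
    (hx : c * (x * x) + d * x + σ c = 0) :
    x * σ x = 1 ↔ σ (2 * c * x + d) = -(2 * c * x + d) := by
  have hx0 : x ≠ 0 := by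
    rintro rfl
    exact hc (by simpa using hx)
  have mul_trace : x * (σ (2 * c * x + d) + (2 * c * x + d)) = 2 * σ c * (x * σ x - 1) := by
    simp only [map_add, map_mul, map_ofNat, hd]
    linear_combination 2 * hx
  rw [← sub_eq_zero, ← mul_eq_zero_iff_left (mul_ne_zero h2 hc), ← mul_trace,
    mul_eq_zero_iff_left hx0, add_eq_zero_iff_eq_neg]

theorem root_norm_one_iff_disc_general (hσ : Function.Involutive σ) (h2 : (2 : R) ≠ 0)
    (hc : c ≠ 0) (hd : σ d = d) (hx : c * (x * x) + d * x + σ c = 0) :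
    x * σ x = 1 ↔
      discrim c d (σ c) = 0 ∨ ¬∃ z, σ z = z ∧ z ^ 2 = discrim c d (σ c) := by
  have hσc : σ c ≠ 0 := (map_ne_zero_iff σ hσ.injective).mpr hc
  have discrim_fixed := map_discrim_eq_self (c := c) hσ hd
  rw [discrim_eq_sq_of_quadratic_eq_zero hx] at discrim_fixed ⊢
  rw [mul_map_eq_one_iff_map_eq_neg h2 hσc hd hx, map_eq_neg_self_iff_of_map_sq h2 discrim_fixed]

end QuadraticWithInvolution

section FiniteField

variable {F : Type*} [Field F] [Fintype F]

lemma exists_ringHom_eq_pow_of_card_eq_pow {q n : ℕ} (hn : n ≠ 0)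
    (hF : Fintype.card F = q ^ n) : ∃ σ : F →+* F, ∀ x, σ x = x ^ q := by
  obtain ⟨p, _⟩ := CharP.exists F
  obtain ⟨m, hp, hm⟩ := FiniteField.card F p
  have : Fact p.Prime := ⟨hp⟩
  have q_dvd : q ∣ p ^ (m : ℕ) := hm ▸ hF ▸ dvd_pow_self q hn
  obtain ⟨k, -, rfl⟩ := (Nat.dvd_prime_pow hp).mp q_dvd
  exact ⟨iterateFrobenius F p k, iterateFrobenius_def p k⟩

lemma two_ne_zero_of_odd_card (hF : Odd (Fintype.card F)) : (2 : F) ≠ 0 :=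
  Ring.two_ne_zero fun hchar =>
    Nat.not_even_iff_odd.mpr hF (Nat.even_iff.mpr (FiniteField.even_card_of_char_two hchar))

end FiniteField

/-- Let `q` be an odd prime power and `F` a finite field with `q^2` elements.
Let `c ∈ F`, `c ≠ 0`, let `d` be a nonzero element of the subfield `𝔽_q = {x : x^q = x}`,
and let `x₀ ∈ F` satisfy `c·x₀² + d·x₀ + c^q = 0`.  Set `Δ = d² − 4·c^(q+1)`.
Then `x₀^(q+1) = 1` iff `Δ = 0` or `Δ` is a nonsquare in `𝔽_q`. -/
theorem root_norm_one_iff_disc (q : ℕ) (hq : IsPrimePow q) (hodd : Odd q)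
    (F : Type*) [Field F] [Fintype F] (hF : Fintype.card F = q ^ 2)
    (c : F) (hc : c ≠ 0) (d : F) (hdq : d ^ q = d) (hd : d ≠ 0)
    (x₀ : F) (hx₀ : c * x₀ ^ 2 + d * x₀ + c ^ q = 0) :
    x₀ ^ (q + 1) = 1 ↔
      d ^ 2 - 4 * c ^ (q + 1) = 0 ∨
        ¬∃ z : F, z ^ q = z ∧ z ^ 2 = d ^ 2 - 4 * c ^ (q + 1) := by
  obtain ⟨σ, hσ⟩ := exists_ringHom_eq_pow_of_card_eq_pow two_ne_zero hF
  have σ_involutive : Function.Involutive σ := fun x => by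
    rw [hσ, hσ, ← pow_mul, ← sq, ← hF, FiniteField.pow_card]
  have h2 : (2 : F) ≠ 0 := two_ne_zero_of_odd_card (hF ▸ hodd.pow)
  simp only [pow_succ' _ q, ← mul_assoc, ← hσ] at hdq hx₀ ⊢
  exact root_norm_one_iff_disc_general σ_involutive h2 hc hdq (by rwa [← sq])
end

section
/- Let a, b, r ∈ F be nonzero and let s ∈ F with s^{q+1} ≠ 1 be a root of b·r·X² + (a^q·r − a·r^q)·X − (b·r)^q = 0 (in particular s ≠ 0). Then s^{-q} is also a root of this equation, s + s^{-q} = −b^{-1}·a^q + b^{-1}·a·r^{q−1}, and s^{1−q} = −(b·r)^{q−1}. -/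
/-!
For `c = b * r` and `d = a ^ q * r - a * r ^ q` the equation reads `c X² + d X - c ^ q = 0`, where
`d ^ q = -d` because `x ↦ x ^ q` is a field involution. Applying the involution to the equation and
reversing the coefficients therefore returns it up to sign, so `s ↦ (s ^ q)⁻¹` permutes its roots.
As `s ^ (q + 1) ≠ 1` says that `s` is not fixed by this map, `s` and `(s ^ q)⁻¹` are the two roots
of the equation, and Vieta's formulas give their sum and product.
-/

open Function

section DistinctRoots

variable {R : Type*} [CommRing R] [NoZeroDivisors R] {c d e x y : R}

theorem mul_add_eq_neg_of_quadratic_roots_ne (hx : c * x ^ 2 + d * x + e = 0)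
    (hy : c * y ^ 2 + d * y + e = 0) (hxy : x ≠ y) : c * (x + y) = -d := by
  refine mul_left_cancel₀ (sub_ne_zero.2 hxy) ?_
  linear_combination hx - hy

theorem mul_mul_eq_of_quadratic_roots_ne (hx : c * x ^ 2 + d * x + e = 0)
    (hy : c * y ^ 2 + d * y + e = 0) (hxy : x ≠ y) : c * (x * y) = e := by
  linear_combination x * mul_add_eq_neg_of_quadratic_roots_ne hx hy hxy - hx

end DistinctRoots

theorem map_mul_sub_mul_map_of_involutive {R : Type*} [CommRing R] {σ : R →+* R}
    (hσ : Involutive σ) (a r : R) : σ (σ a * r - a * σ r) = -(σ a * r - a * σ r) := by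
  rw [map_sub, map_mul, map_mul, hσ a, hσ r]
  ring

section Involution

variable {F : Type*} [Field F] {σ : F →+* F}

theorem quadratic_root_inv_map_of_involutive (hσ : Involutive σ) {c d s : F} (hd : σ d = -d)
    (hs : s ≠ 0) (hroot : c * s ^ 2 + d * s - σ c = 0) :
    c * (σ s)⁻¹ ^ 2 + d * (σ s)⁻¹ - σ c = 0 := by
  have hσs : σ s ≠ 0 := (map_ne_zero σ).2 hs
  have hconj : σ c * σ s ^ 2 - d * σ s - c = 0 := by
    simpa only [map_sub, map_add, map_mul, map_pow, map_zero, hd, hσ c, neg_mul,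
      ← sub_eq_add_neg] using congrArg σ hroot
  field_simp
  linear_combination -hconj

theorem other_root_and_viete_general (hσ : Involutive σ) {a b r s : F} (hb : b ≠ 0) (hr : r ≠ 0)
    (hs : s * σ s ≠ 1)
    (hroot : b * r * s ^ 2 + (σ a * r - a * σ r) * s - σ (b * r) = 0) :
    s ≠ 0 ∧
    b * r * (σ s)⁻¹ ^ 2 + (σ a * r - a * σ r) * (σ s)⁻¹ - σ (b * r) = 0 ∧
    s + (σ s)⁻¹ = -b⁻¹ * σ a + b⁻¹ * a * (σ r / r) ∧
    s * (σ s)⁻¹ = -(σ (b * r) / (b * r)) := by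
  have hbr : b * r ≠ 0 := mul_ne_zero hb hr
  have hs0 : s ≠ 0 := by
    rintro rfl
    exact (map_ne_zero σ).2 hbr (by linear_combination -hroot)
  have hne : s ≠ (σ s)⁻¹ := fun h ↦ hs ((mul_eq_one_iff_eq_inv₀ ((map_ne_zero σ).2 hs0)).2 h)
  have hroot' := quadratic_root_inv_map_of_involutive hσ
    (map_mul_sub_mul_map_of_involutive hσ a r) hs0 hroot
  refine ⟨hs0, hroot', ?_, ?_⟩
  · have hsum : b * r * (s + (σ s)⁻¹) = -(σ a * r - a * σ r) :=
      mul_add_eq_neg_of_quadratic_roots_ne (by rwa [← sub_eq_add_neg])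
        (by rwa [← sub_eq_add_neg]) hne
    rw [eq_div_of_mul_eq hbr ((mul_comm _ _).trans hsum)]
    field_simp
    ring
  · have hprod : b * r * (s * (σ s)⁻¹) = -σ (b * r) :=
      mul_mul_eq_of_quadratic_roots_ne (by rwa [← sub_eq_add_neg])
        (by rwa [← sub_eq_add_neg]) hne
    rw [eq_div_of_mul_eq hbr ((mul_comm _ _).trans hprod), neg_div]

end Involution

theorem exists_ringHom_eq_pow_of_card_eq_pow_s13 {R : Type*} [CommRing R] [IsDomain R] [Fintype R]
    {q n : ℕ} (hq : IsPrimePow q) (hR : Fintype.card R = q ^ n) :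
    ∃ σ : R →+* R, ∀ x, σ x = x ^ q := by
  obtain ⟨p, k, hp, -, rfl⟩ := hq
  have : Fact p.Prime := ⟨hp.nat_prime⟩
  have : CharP R p := charP_of_card_eq_prime_pow (hR.trans (pow_mul p k n).symm)
  exact ⟨iterateFrobenius R p k, iterateFrobenius_def p k⟩

theorem exists_involutive_ringHom_eq_pow_of_card_eq_sq {F : Type*} [Field F] [Fintype F] {q : ℕ}
    (hq : IsPrimePow q) (hF : Fintype.card F = q ^ 2) :
    ∃ σ : F →+* F, Involutive σ ∧ ∀ x, σ x = x ^ q := by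
  obtain ⟨σ, hσ⟩ := exists_ringHom_eq_pow_of_card_eq_pow_s13 hq hF
  refine ⟨σ, fun x ↦ ?_, hσ⟩
  rw [hσ, hσ, ← pow_mul, ← sq, ← hF, FiniteField.pow_card]

theorem pow_sub_one_eq_div {G₀ : Type*} [GroupWithZero G₀] {x : G₀} (hx : x ≠ 0) {n : ℕ}
    (hn : n ≠ 0) : x ^ (n - 1) = x ^ n / x :=
  eq_div_of_mul_eq hx (pow_sub_one_mul hn x)

/-- Let `q` be a prime power and `F` a finite field with `q^2` elements, let
`a, b, r ∈ F` be nonzero and let `s ∈ F` with `s^(q+1) ≠ 1` be a root of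
`b·r·X² + (a^q·r − a·r^q)·X − (b·r)^q = 0` (in particular `s ≠ 0`).  Then `s^{-q}` is
also a root, `s + s^{-q} = −b⁻¹·a^q + b⁻¹·a·r^(q−1)`, and `s^(1−q) = −(b·r)^(q−1)`. -/
theorem other_root_and_viete (q : ℕ) (hq : IsPrimePow q) (F : Type*) [Field F] [Fintype F]
    (hF : Fintype.card F = q ^ 2) (a b r : F) (ha : a ≠ 0) (hb : b ≠ 0) (hr : r ≠ 0)
    (s : F) (hs : s ^ (q + 1) ≠ 1)
    (hroot : b * r * s ^ 2 + (a ^ q * r - a * r ^ q) * s - (b * r) ^ q = 0) :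
    s ≠ 0 ∧
    b * r * ((s ^ q)⁻¹) ^ 2 + (a ^ q * r - a * r ^ q) * (s ^ q)⁻¹ - (b * r) ^ q = 0 ∧
    s + (s ^ q)⁻¹ = -b⁻¹ * a ^ q + b⁻¹ * a * r ^ (q - 1) ∧
    s * (s ^ q)⁻¹ = -(b * r) ^ (q - 1) := by
  obtain ⟨σ, hinv, hσ⟩ := exists_involutive_ringHom_eq_pow_of_card_eq_sq hq hF
  simp only [pow_succ' s q, pow_sub_one_eq_div hr hq.ne_zero,
    pow_sub_one_eq_div (mul_ne_zero hb hr) hq.ne_zero, ← hσ] at hs hroot ⊢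
  exact other_root_and_viete_general hinv hb hr hs hroot
end
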